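/- Let $\vec{P}=(p_1,p_2)$ with $1<p_1,p_2<\infty$, $1/p=1/p_1+1/p_2$ and $1<p<\infty$, and let $\vec{w}=(w_1,w_2)\in A_{\vec{P}}$. Then there is a constant $C$ depending only on $n$ and $\vec{P}$ such that for every sparse family $\mathcal{S}$ of cubes, $\Big\|\sum_{Q\in\mathcal{S}}\langle\sigma_1\rangle_Q\langle\sigma_2\rangle_Q\chi_Q\Big\|_{L^p(v_{\vec{w}})}\ \le\ C\,[\vec{w}]_{A_{\vec{P}}}^{1/p}\Big(\sum_{Q\in\mathcal{S}}\langle\sigma_1\rangle_Q^{p/p_1}\langle\sigma_2\rangle_Q^{p/p_2}|Q|\Big)^{1/p}$. -/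

import Mathlib

open MeasureTheory Set ENNReal

noncomputable section

/-- Euclidean space `ℝⁿ`. -/
abbrev Rn (n : ℕ) := Fin n → ℝ

/-- `Q` is an axis-parallel (half-open) cube of sidelength `h`. -/
def HasSide {n : ℕ} (Q : Set (Rn n)) (h : ℝ) : Prop :=
  ∃ c : Rn n, Q = {x | ∀ i, c i ≤ x i ∧ x i < c i + h}

/-- `Q` is an axis-parallel cube (with positive sidelength). -/
def IsCube {n : ℕ} (Q : Set (Rn n)) : Prop :=
  ∃ h : ℝ, 0 < h ∧ HasSide Q h

/-- A dyadic cubes system: cubes of sidelengths `2^k`, pairwise nested or disjoint,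
and for each fixed `k` the cubes of sidelength `2^k` cover (hence partition) `ℝⁿ`. -/
def IsDyadicSystem {n : ℕ} (D : Set (Set (Rn n))) : Prop :=
  (∀ Q ∈ D, ∃ k : ℤ, HasSide Q ((2 : ℝ) ^ k)) ∧
  (∀ Q ∈ D, ∀ R ∈ D, Q ∩ R = Q ∨ Q ∩ R = R ∨ Q ∩ R = ∅) ∧
  (∀ k : ℤ, ∀ x : Rn n, ∃ Q ∈ D, HasSide Q ((2 : ℝ) ^ k) ∧ x ∈ Q)

/-- A sparse family: each `Q` carries a measurable subset `E Q ⊆ Q` with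
`|E Q| ≥ |Q|/2`, the sets `E Q` being pairwise disjoint. -/
def IsSparse {n : ℕ} (S : Set (Set (Rn n))) : Prop :=
  ∃ E : Set (Rn n) → Set (Rn n),
    (∀ Q ∈ S, E Q ⊆ Q ∧ MeasurableSet (E Q) ∧ volume Q ≤ 2 * volume (E Q)) ∧
    S.Pairwise fun Q R => Disjoint (E Q) (E R)

/-- A weight: a measurable nonnegative (`ℝ≥0∞`-valued) locally integrable function. -/
def IsWeight {n : ℕ} (w : Rn n → ℝ≥0∞) : Prop :=
  Measurable w ∧ ∀ Q : Set (Rn n), IsCube Q → (∫⁻ x in Q, w x) ≠ ∞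

/-- `w(Q) = ∫_Q w`. -/
def mass {n : ℕ} (w : Rn n → ℝ≥0∞) (Q : Set (Rn n)) : ℝ≥0∞ := ∫⁻ x in Q, w x

/-- `⟨w⟩_Q = w(Q)/|Q|`. -/
def avg {n : ℕ} (w : Rn n → ℝ≥0∞) (Q : Set (Rn n)) : ℝ≥0∞ := mass w Q / volume Q

/-- The conjugate exponent `q' = q/(q-1)`. -/
def conj (q : ℝ) : ℝ := q / (q - 1)

/-- The product weight `v_w = w₁^{p/p₁} w₂^{p/p₂}`. -/
def vweight {n : ℕ} (p p1 p2 : ℝ) (w1 w2 : Rn n → ℝ≥0∞) : Rn n → ℝ≥0∞ :=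
  fun x => w1 x ^ (p / p1) * w2 x ^ (p / p2)

/-- The dual weight `σ = w^{1-q'}`. -/
def dualW {n : ℕ} (q : ℝ) (w : Rn n → ℝ≥0∞) : Rn n → ℝ≥0∞ :=
  fun x => w x ^ (1 - conj q)

/-- The multilinear `A_{\vec P}` constant
`[\vec w]_{A_{\vec P}} = sup_Q ⟨v_w⟩_Q ⟨σ₁⟩_Q^{p/p₁'} ⟨σ₂⟩_Q^{p/p₂'}`. -/
def APconst {n : ℕ} (p p1 p2 : ℝ) (w1 w2 : Rn n → ℝ≥0∞) : ℝ≥0∞ :=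
  ⨆ (Q : Set (Rn n)) (_ : IsCube Q),
    avg (vweight p p1 p2 w1 w2) Q * avg (dualW p1 w1) Q ^ (p / conj p1) *
      avg (dualW p2 w2) Q ^ (p / conj p2)

/-- The (linear) `A_q` constant `[w]_{A_q} = sup_Q ⟨w⟩_Q ⟨w^{1-q'}⟩_Q^{q-1}`. -/
def AqConst {n : ℕ} (q : ℝ) (w : Rn n → ℝ≥0∞) : ℝ≥0∞ :=
  ⨆ (Q : Set (Rn n)) (_ : IsCube Q),
    avg w Q * avg (fun x => w x ^ (1 - conj q)) Q ^ (q - 1)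

/-- The Hardy–Littlewood maximal operator (over axis-parallel cubes). -/
def HLMax {n : ℕ} (w : Rn n → ℝ≥0∞) (x : Rn n) : ℝ≥0∞ :=
  ⨆ (Q : Set (Rn n)) (_ : IsCube Q) (_ : x ∈ Q), avg w Q

/-- The Fujii–Wilson `A_∞` constant `[w]_{A_∞} = sup_Q w(Q)⁻¹ ∫_Q M(wχ_Q)`. -/
def AinfConst {n : ℕ} (w : Rn n → ℝ≥0∞) : ℝ≥0∞ :=
  ⨆ (Q : Set (Rn n)) (_ : IsCube Q), (∫⁻ x in Q, HLMax (Q.indicator w) x) / mass w Q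

/-- `‖g‖_{L^p(v)}` for an `ℝ≥0∞`-valued function. -/
def lpNorm {n : ℕ} (g : Rn n → ℝ≥0∞) (p : ℝ) (v : Rn n → ℝ≥0∞) : ℝ≥0∞ :=
  (∫⁻ x, g x ^ p * v x) ^ (1 / p)

/-- `‖g‖_{L^{p,∞}(v)} = sup_{t>0} t · v({g > t})^{1/p}`. -/
def wkNorm {n : ℕ} (g : Rn n → ℝ≥0∞) (p : ℝ) (v : Rn n → ℝ≥0∞) : ℝ≥0∞ :=
  ⨆ t : ℝ≥0∞, t * mass v {x | t < g x} ^ (1 / p)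

/-- The pointwise `ℝ≥0∞`-valued absolute value of a real function. -/
def eAbs {n : ℕ} (f : Rn n → ℝ) : Rn n → ℝ≥0∞ := fun x => (‖f x‖₊ : ℝ≥0∞)

/-- `f ∈ L^p(v)`. -/
def MemLpW {n : ℕ} (f : Rn n → ℝ) (p : ℝ) (v : Rn n → ℝ≥0∞) : Prop :=
  Measurable f ∧ lpNorm (eAbs f) p v ≠ ∞

/-- The bilinear sparse operator `A_{D,S}(g₁,g₂) = ∑_{Q∈S} ⟨g₁⟩_Q ⟨g₂⟩_Q χ_Q`. -/
def sparseOp {n : ℕ} (S : Set (Set (Rn n))) (g1 g2 : Rn n → ℝ≥0∞) (x : Rn n) : ℝ≥0∞ :=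
  ∑' Q : S, Set.indicator (Q : Set (Rn n)) (fun _ => avg g1 Q * avg g2 Q) x

/-- The weighted average `⟨f⟩_Q^w = (∫_Q |f| w)/w(Q)`. -/
def wAvg {n : ℕ} (f : Rn n → ℝ) (w : Rn n → ℝ≥0∞) (Q : Set (Rn n)) : ℝ≥0∞ :=
  (∫⁻ x in Q, (‖f x‖₊ : ℝ≥0∞) * w x) / mass w Q


/-- The exponent `β = 1/p + max{min{1/p₁', (1/p₁')(p₂'/p)}, min{1/p₂', (1/p₂')(p₁'/p)}}`. -/
def betaExp (p p1 p2 : ℝ) : ℝ :=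
  1 / p + max (min (1 / conj p1) (1 / conj p1 * (conj p2 / p)))
              (min (1 / conj p2) (1 / conj p2 * (conj p1 / p)))

/-- The exponent `γ = max{1, p₁'/p, p₂'/p}`. -/
def gammaExp (p p1 p2 : ℝ) : ℝ := max 1 (max (conj p1 / p) (conj p2 / p))

end

/-!
Write `a`, `b` for the means of `σ₁`, `σ₂` and `F_Q` for the part of the sparse sum carried by the
cubes inside `Q`. Since the cubes through a point form a chain, `(∑ c_Q χ_Q) ^ p` is at most
`p * ∑ c_Q F_Q ^ (p - 1) χ_Q`, so everything reduces to the localized moments `∫ F_Q ^ s dν`,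
`ν = v dx`. These are bounded by a constant multiple of
`A ^ (t s) * ⟨ν⟩_Q ^ (1 - t s) * a ^ (s (1 - t α)) * b ^ (s (1 - t β)) * |Q|`, where `α = p / p₁'`,
`β = p / p₂'` and `A` is the Muckenhoupt constant. This majorant arises from the trivial quantity
`(a b) ^ s ⟨ν⟩_Q |Q|` by spending the Muckenhoupt condition `t s` times, where `t` is so large that
the total exponent of the means falls below `1`; by a weak-type estimate such a quantity, summed
over the cubes inside `Q`, is controlled by its value at `Q`. The chain inequality then raises the
moment bounds from `s` to `s + 1`, and at `s = p - 1` the product of the coefficient `a b` with the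
majorant is at most `A * a ^ (p - α) * b ^ (p - β) * |Q|`.
-/

section PowerInequalities

lemma add_rpow_le_rpow_add_mul_rpow_sub_one_real {a b s : ℝ} (ha : 0 ≤ a) (hb : 0 ≤ b)
    (hs : 1 ≤ s) : (a + b) ^ s ≤ b ^ s + s * (a * (a + b) ^ (s - 1)) := by
  rcases (add_nonneg ha hb).eq_or_lt with h0 | hpos
  · obtain ⟨rfl, rfl⟩ : a = 0 ∧ b = 0 := by constructor <;> linarith
    simp
  · have bernoulli : 1 + s * (-a / (a + b)) ≤ (1 + -a / (a + b)) ^ s :=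
      one_add_mul_self_le_rpow_one_add (by rw [le_div_iff₀ hpos]; linarith) hs
    rw [show 1 + -a / (a + b) = b / (a + b) by field_simp; ring, Real.div_rpow hb hpos.le,
      le_div_iff₀ (Real.rpow_pos_of_pos hpos s)] at bernoulli
    have hsplit : (a + b) ^ s = (a + b) * (a + b) ^ (s - 1) := by
      rw [← Real.rpow_one_add' hpos.le (by linarith), add_sub_cancel]
    have hlhs : (1 + s * (-a / (a + b))) * (a + b) ^ s
        = (a + b) ^ s - s * (a * (a + b) ^ (s - 1)) := by
      rw [hsplit]; field_simp; ring
    linarith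

lemma add_rpow_le_rpow_add_mul_rpow_sub_one (a b : ℝ≥0∞) {s : ℝ} (hs : 1 ≤ s) :
    (a + b) ^ s ≤ b ^ s + ENNReal.ofReal s * (a * (a + b) ^ (s - 1)) := by
  have hs0 : 0 < s := one_pos.trans_le hs
  rcases eq_or_ne b ∞ with rfl | hb
  · simp [ENNReal.top_rpow_of_pos hs0]
  rcases eq_or_ne a ∞ with rfl | ha
  · rcases hs.eq_or_lt with rfl | hs1
    · simp
    · simp [ENNReal.top_rpow_of_pos (sub_pos.2 hs1), hs0]
  lift a to NNReal using ha
  lift b to NNReal using hb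
  have key := ENNReal.ofReal_le_ofReal
    (add_rpow_le_rpow_add_mul_rpow_sub_one_real a.coe_nonneg b.coe_nonneg hs)
  rw [ENNReal.ofReal_add (by positivity) (by positivity), ENNReal.ofReal_mul hs0.le,
    ENNReal.ofReal_mul a.coe_nonneg, ← ENNReal.ofReal_rpow_of_nonneg (by positivity) hs0.le,
    ← ENNReal.ofReal_rpow_of_nonneg (by positivity) hs0.le,
    ← ENNReal.ofReal_rpow_of_nonneg (by positivity) (by linarith)] at key
  simpa only [ENNReal.ofReal_add a.coe_nonneg b.coe_nonneg, ENNReal.ofReal_coe_nnreal] using key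

lemma sum_rpow_le_sum_mul_rpow_of_isChain {ι : Type*} [PartialOrder ι] [DecidableLE ι] {s : ℝ}
    (hs : 1 ≤ s) (c : ι → ℝ≥0∞) (T : Finset ι) (hT : IsChain (· ≤ ·) (T : Set ι)) :
    (∑ i ∈ T, c i) ^ s ≤
      ENNReal.ofReal s * ∑ i ∈ T, c i * (∑ j ∈ T with j ≤ i, c j) ^ (s - 1) := by
  classical
  induction T using Finset.strongInduction with
  | H T ih =>
    rcases T.eq_empty_or_nonempty with rfl | hne
    · simp [ENNReal.zero_rpow_of_pos (one_pos.trans_le hs)]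
    obtain ⟨m, hm⟩ := T.exists_maximal hne
    have hle : ∀ i ∈ T, i ≤ m := fun i hi => (hT.total hi hm.1).elim id (hm.2 hi)
    have hbelow : T.filter (· ≤ m) = T := Finset.filter_true_of_mem hle
    calc (∑ i ∈ T, c i) ^ s
        = (c m + ∑ i ∈ T.erase m, c i) ^ s := by rw [Finset.add_sum_erase T c hm.1]
      _ ≤ (∑ i ∈ T.erase m, c i) ^ s + ENNReal.ofReal s * (c m * (∑ i ∈ T, c i) ^ (s - 1)) := by
        rw [← Finset.add_sum_erase T c hm.1]
        exact add_rpow_le_rpow_add_mul_rpow_sub_one _ _ hs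
      _ ≤ ENNReal.ofReal s * ∑ i ∈ T.erase m, c i * (∑ j ∈ T with j ≤ i, c j) ^ (s - 1)
            + ENNReal.ofReal s * (c m * (∑ j ∈ T with j ≤ m, c j) ^ (s - 1)) := by
        rw [hbelow]
        gcongr
        refine (ih _ (Finset.erase_ssubset hm.1)
          (hT.mono (Finset.coe_subset.2 (T.erase_subset m)))).trans ?_
        gcongr
        exact T.erase_subset m
      _ = ENNReal.ofReal s * ∑ i ∈ T, c i * (∑ j ∈ T with j ≤ i, c j) ^ (s - 1) := by
        rw [← mul_add, add_comm,
          Finset.add_sum_erase T (fun i => c i * (∑ j ∈ T with j ≤ i, c j) ^ (s - 1)) hm.1]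

lemma sum_rpow_le_sum_rpow {ι : Type*} {s : ℝ} (hs0 : 0 < s) (hs1 : s ≤ 1) (c : ι → ℝ≥0∞)
    (T : Finset ι) : (∑ i ∈ T, c i) ^ s ≤ ∑ i ∈ T, c i ^ s :=
  Finset.le_sum_of_subadditive (· ^ s) (ENNReal.zero_rpow_of_pos hs0).le
    (fun a b => ENNReal.rpow_add_le_add_rpow a b hs0.le hs1) T c

lemma rpow_le_one_add_tsum_two_pow {r : ℝ} (hr : 0 < r) {x : ℝ≥0∞} (hx : x ≠ ∞) :
    x ^ r ≤ 1 + ∑' k : ℕ, if 2 ^ k ≤ x then ((2 : ℝ≥0∞) ^ r) ^ (k + 1) else 0 := by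
  rcases le_total x 1 with h | h
  · exact (ENNReal.rpow_le_one h hr.le).trans le_self_add
  lift x to NNReal using hx
  obtain ⟨k, hk, hk'⟩ :=
    exists_nat_pow_near (x := x) (y := 2) (by exact_mod_cast h) _root_.one_lt_two
  have hlow : (2 : ℝ≥0∞) ^ k ≤ x := by exact_mod_cast hk
  have hup : (x : ℝ≥0∞) ≤ 2 ^ (k + 1) := by exact_mod_cast hk'.le
  calc (x : ℝ≥0∞) ^ r ≤ (2 ^ (k + 1)) ^ r := ENNReal.rpow_le_rpow hup hr.le
    _ = if 2 ^ k ≤ (x : ℝ≥0∞) then ((2 : ℝ≥0∞) ^ r) ^ (k + 1) else 0 := by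
      rw [if_pos hlow, ← ENNReal.rpow_natCast, ← ENNReal.rpow_natCast, ← ENNReal.rpow_mul,
        ← ENNReal.rpow_mul, mul_comm]
    _ ≤ ∑' k : ℕ, if 2 ^ k ≤ (x : ℝ≥0∞) then ((2 : ℝ≥0∞) ^ r) ^ (k + 1) else 0 :=
      ENNReal.le_tsum k
    _ ≤ _ := le_add_self

lemma sum_rpow_mul_le_sum_add_tsum_two_pow {ι : Type*} {r : ℝ} (hr : 0 < r) (T : Finset ι)
    {f : ι → ℝ≥0∞} (hf : ∀ i ∈ T, f i ≠ ∞) (w : ι → ℝ≥0∞) :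
    ∑ i ∈ T, f i ^ r * w i ≤
      ∑ i ∈ T, w i + ∑' k : ℕ, ((2 : ℝ≥0∞) ^ r) ^ (k + 1) * ∑ i ∈ T with 2 ^ k ≤ f i, w i := by
  calc ∑ i ∈ T, f i ^ r * w i
      ≤ ∑ i ∈ T, (1 + ∑' k : ℕ, if 2 ^ k ≤ f i then ((2 : ℝ≥0∞) ^ r) ^ (k + 1) else 0) * w i := by
        gcongr with i hi
        exact rpow_le_one_add_tsum_two_pow hr (hf i hi)
    _ = ∑ i ∈ T, w i
          + ∑' k : ℕ, ∑ i ∈ T, if 2 ^ k ≤ f i then ((2 : ℝ≥0∞) ^ r) ^ (k + 1) * w i else 0 := by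
        simp only [add_mul, one_mul, Finset.sum_add_distrib, ← ENNReal.tsum_mul_right, ite_mul,
          zero_mul]
        rw [Summable.tsum_finsetSum fun _ _ => ENNReal.summable]
    _ = _ := by simp only [Finset.mul_sum, Finset.sum_filter, mul_ite, mul_zero]

lemma prod_rpow_eq_rpow_sum {ι : Type*} (c : ℝ≥0∞) (I : Finset ι) {θ : ι → ℝ}
    (hθ : ∀ i ∈ I, 0 ≤ θ i) : ∏ i ∈ I, c ^ θ i = c ^ ∑ i ∈ I, θ i := by
  classical
  induction I using Finset.induction with
  | empty => simp
  | insert i I hi ih =>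
    rw [Finset.forall_mem_insert] at hθ
    rw [Finset.prod_insert hi, Finset.sum_insert hi, ih hθ.2,
      ENNReal.rpow_add_of_nonneg _ _ hθ.1 (Finset.sum_nonneg hθ.2)]

lemma sum_prod_rpow_le_prod_sum_rpow {ι κ : Type*} (T : Finset ι) (J : Finset κ)
    (g : κ → ι → ℝ≥0∞) {θ : κ → ℝ} (hθ : ∀ j ∈ J, 0 ≤ θ j) (hθ1 : ∑ j ∈ J, θ j = 1) :
    ∑ i ∈ T, ∏ j ∈ J, g j i ^ θ j ≤ ∏ j ∈ J, (∑ i ∈ T, g j i) ^ θ j := by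
  let _ : MeasurableSpace T := ⊤
  have holder := ENNReal.lintegral_prod_norm_pow_le (μ := Measure.count) J
    (f := fun j (i : T) => g j i) (fun _ _ => measurable_from_top.aemeasurable) hθ1 hθ
  simpa only [lintegral_count, tsum_fintype, Finset.univ_eq_attach,
    Finset.sum_attach T (fun i => ∏ j ∈ J, g j i ^ θ j), fun j => Finset.sum_attach T (g j)]
    using holder

lemma sum_prod_rpow_mul_le_prod_sum_rpow_mul {ι κ : Type*} (T : Finset ι) (J : Finset κ)
    (f : κ → ι → ℝ≥0∞) (w : ι → ℝ≥0∞) {e : κ → ℝ} (he : ∀ j ∈ J, 0 ≤ e j)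
    (hsum : 0 < ∑ j ∈ J, e j) :
    ∑ i ∈ T, (∏ j ∈ J, f j i ^ e j) * w i ≤
      ∏ j ∈ J, (∑ i ∈ T, f j i ^ (∑ j ∈ J, e j) * w i) ^ (e j / ∑ j ∈ J, e j) := by
  set r := ∑ j ∈ J, e j with hr
  have hθ : ∀ j ∈ J, 0 ≤ e j / r := fun j hj => div_nonneg (he j hj) hsum.le
  have hθ1 : ∑ j ∈ J, e j / r = 1 := by rw [← Finset.sum_div, ← hr, div_self hsum.ne']
  refine le_of_eq_of_le (Finset.sum_congr rfl fun i _ => ?_)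
    (sum_prod_rpow_le_prod_sum_rpow T J (fun j i => f j i ^ r * w i) hθ hθ1)
  have hw : w i = ∏ j ∈ J, w i ^ (e j / r) := by
    rw [prod_rpow_eq_rpow_sum _ _ hθ, hθ1, ENNReal.rpow_one]
  conv_lhs => rw [hw, ← Finset.prod_mul_distrib]
  refine Finset.prod_congr rfl fun j hj => ?_
  rw [ENNReal.mul_rpow_of_nonneg _ _ (hθ j hj), ← ENNReal.rpow_mul, mul_div_cancel₀ _ hsum.ne']

end PowerInequalities

section Laminar

variable {X : Type*}

/-- A laminar family of sets: any two members are nested or disjoint. -/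
def IsLaminar (S : Set (Set X)) : Prop :=
  ∀ Q ∈ S, ∀ R ∈ S, Q ⊆ R ∨ R ⊆ Q ∨ Disjoint Q R

namespace IsLaminar

lemma mono {S T : Set (Set X)} (hS : IsLaminar S) (hT : T ⊆ S) : IsLaminar T :=
  fun Q hQ R hR => hS Q (hT hQ) R (hT hR)

lemma isChain_setOf_mem {S : Set (Set X)} (hS : IsLaminar S) (x : X) :
    IsChain (· ≤ ·) {Q ∈ S | x ∈ Q} := by
  rintro Q ⟨hQ, hxQ⟩ R ⟨hR, hxR⟩ -
  rcases hS Q hQ R hR with h | h | h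
  · exact Or.inl h
  · exact Or.inr h
  · exact absurd hxR (disjoint_left.1 h hxQ)

lemma pairwiseDisjoint_maximal {S : Set (Set X)} (hS : IsLaminar S) :
    {Q | Maximal (· ∈ S) Q}.PairwiseDisjoint id := by
  intro Q hQ R hR hne
  rcases hS Q hQ.1 R hR.1 with h | h | h
  · exact absurd (hQ.eq_of_subset hR.1 h) hne
  · exact absurd (hR.eq_of_subset hQ.1 h).symm hne
  · exact h

end IsLaminar

lemma biUnion_maximal_eq_biUnion (T : Finset (Set X)) :
    ⋃ Q ∈ {Q | Maximal (· ∈ T) Q}, Q = ⋃ Q ∈ T, Q := by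
  refine subset_antisymm (biUnion_subset_biUnion_left fun Q hQ => hQ.1) ?_
  refine iUnion₂_subset fun Q hQ => ?_
  obtain ⟨R, hQR, hR⟩ := T.finite_toSet.exists_le_maximal hQ
  exact hQR.trans (subset_biUnion_of_mem (u := id) hR)

lemma IsLaminar.measure_biUnion_le_measure_biUnion [MeasurableSpace X] {μ σ : Measure X}
    {T : Finset (Set X)} (hT : IsLaminar (T : Set (Set X))) (hmeas : ∀ Q ∈ T, MeasurableSet Q)
    (hle : ∀ Q ∈ T, μ Q ≤ σ Q) : μ (⋃ Q ∈ T, Q) ≤ σ (⋃ Q ∈ T, Q) := by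
  have hcount : {Q | Maximal (· ∈ T) Q}.Countable :=
    (T.finite_toSet.subset fun Q hQ => hQ.1).countable
  calc μ (⋃ Q ∈ T, Q) = μ (⋃ Q ∈ {Q | Maximal (· ∈ T) Q}, Q) := by
        rw [biUnion_maximal_eq_biUnion]
    _ ≤ ∑' Q : {Q | Maximal (· ∈ T) Q}, μ Q := measure_biUnion_le μ hcount _
    _ ≤ ∑' Q : {Q | Maximal (· ∈ T) Q}, σ Q := ENNReal.tsum_le_tsum fun Q => hle Q Q.2.1
    _ = σ (⋃ Q ∈ {Q | Maximal (· ∈ T) Q}, Q) :=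
        (measure_biUnion hcount hT.pairwiseDisjoint_maximal fun Q hQ => hmeas Q hQ.1).symm
    _ = σ (⋃ Q ∈ T, Q) := by rw [biUnion_maximal_eq_biUnion]

end Laminar

section Carleson

variable {X : Type*} [MeasurableSpace X]

/-- `⟨σ⟩_Q = σ(Q) / μ(Q)`, the mean over `Q` of the density of `σ` with respect to `μ`. -/
noncomputable def meanDensity (μ σ : Measure X) (Q : Set X) : ℝ≥0∞ := σ Q / μ Q

/-- A laminar family of sets of positive finite measure satisfying the `Λ`-Carleson packing
condition. This is the only consequence of sparseness that is needed; packing is measured against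
the union of the subfamily, so that no ambient set has to be fixed. -/
structure IsCarlesonFamily (μ : Measure X) (Λ : ℝ≥0∞) (S : Set (Set X)) : Prop where
  measurableSet : ∀ Q ∈ S, MeasurableSet Q
  measure_ne_zero : ∀ Q ∈ S, μ Q ≠ 0
  measure_ne_top : ∀ Q ∈ S, μ Q ≠ ∞
  isLaminar : IsLaminar S
  sum_measure_le : ∀ T : Finset (Set X), (T : Set (Set X)) ⊆ S →
    ∑ Q ∈ T, μ Q ≤ Λ * μ (⋃ Q ∈ T, Q)

/-- The constant with which the powers `⟨σ⟩_Q ^ r` pack along a `Λ`-Carleson family. It blows up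
as `r` increases to `1`. -/
noncomputable def packingConst (Λ : ℝ≥0∞) (r : ℝ) : ℝ≥0∞ := Λ * (1 + 2 ^ r * (1 - 2 ^ (r - 1))⁻¹)

lemma packingConst_ne_top {Λ : ℝ≥0∞} (hΛ : Λ ≠ ∞) {r : ℝ} (hr : r < 1) :
    packingConst Λ r ≠ ∞ := by
  have hratio : (2 : ℝ≥0∞) ^ (r - 1) < 1 :=
    ENNReal.rpow_lt_one_of_one_lt_of_neg ENNReal.one_lt_two (sub_neg.2 hr)
  exact ENNReal.mul_ne_top hΛ (ENNReal.add_ne_top.2 ⟨ENNReal.one_ne_top, ENNReal.mul_ne_top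
    (ENNReal.rpow_ne_top_of_ne_zero two_ne_zero ENNReal.ofNat_ne_top)
    (ENNReal.inv_ne_top.2 (tsub_pos_of_lt hratio).ne')⟩)

lemma packingConst_eq_add_tsum (Λ : ℝ≥0∞) (r : ℝ) :
    packingConst Λ r = Λ + ∑' k : ℕ, ((2 : ℝ≥0∞) ^ r) ^ (k + 1) * (Λ * (2 ^ k)⁻¹) := by
  have hterm : ∀ k : ℕ, ((2 : ℝ≥0∞) ^ r) ^ (k + 1) * (Λ * (2 ^ k)⁻¹)
      = Λ * 2 ^ r * (2 ^ (r - 1)) ^ k := fun k => by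
    rw [ENNReal.rpow_sub _ _ two_ne_zero ENNReal.ofNat_ne_top, ENNReal.rpow_one, div_eq_mul_inv,
      mul_pow, pow_succ, ENNReal.inv_pow]
    ring
  simp only [hterm, ENNReal.tsum_mul_left, ENNReal.tsum_geometric, packingConst]
  ring

namespace IsCarlesonFamily

variable {μ σ : Measure X} {Λ : ℝ≥0∞} {S : Set (Set X)} {T : Finset (Set X)} {U : Set X}

lemma meanDensity_mul_measure (hS : IsCarlesonFamily μ Λ S) (hU : U ∈ S) (σ : Measure X) :
    meanDensity μ σ U * μ U = σ U :=
  ENNReal.div_mul_cancel (hS.measure_ne_zero U hU) (hS.measure_ne_top U hU)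

lemma one_le_const (hS : IsCarlesonFamily μ Λ S) (hU : U ∈ S) : 1 ≤ Λ := by
  have hpack := hS.sum_measure_le {U} (by simpa using hU)
  rw [Finset.sum_singleton, Finset.set_biUnion_singleton] at hpack
  by_contra! hΛ
  refine (ENNReal.mul_lt_mul_left (hS.measure_ne_zero U hU) (hS.measure_ne_top U hU) hΛ).not_ge ?_
  rwa [one_mul]

lemma mul_sum_measure_le (hS : IsCarlesonFamily μ Λ S) (hT : (T : Set (Set X)) ⊆ S)
    (hTU : ∀ Q ∈ T, Q ⊆ U) {τ : ℝ≥0∞} (hτ : ∀ Q ∈ T, τ * μ Q ≤ σ Q) :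
    τ * ∑ Q ∈ T, μ Q ≤ Λ * σ U :=
  calc τ * ∑ Q ∈ T, μ Q
      ≤ τ * (Λ * μ (⋃ Q ∈ T, Q)) := by gcongr; exact hS.sum_measure_le T hT
    _ = Λ * (τ • μ) (⋃ Q ∈ T, Q) := by
      rw [Measure.smul_apply, smul_eq_mul, mul_left_comm]
    _ ≤ Λ * σ (⋃ Q ∈ T, Q) := by
      gcongr Λ * ?_
      exact (hS.isLaminar.mono hT).measure_biUnion_le_measure_biUnion (μ := τ • μ)
        (fun Q hQ => hS.measurableSet Q (hT hQ)) hτ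
    _ ≤ Λ * σ U := by gcongr; exact iUnion₂_subset hTU

lemma sum_meanDensity_rpow_mul_le_of_le (hS : IsCarlesonFamily μ Λ S) {r : ℝ} (hr : 0 < r)
    (hU : U ∈ S) (hT : (T : Set (Set X)) ⊆ S) (hTU : ∀ Q ∈ T, Q ⊆ U) (hσ : σ U ≤ μ U) :
    ∑ Q ∈ T, meanDensity μ σ Q ^ r * μ Q ≤ packingConst Λ r * μ U := by
  have hfin : ∀ Q ∈ T, meanDensity μ σ Q ≠ ∞ := fun Q hQ =>
    ENNReal.div_ne_top (((measure_mono (hTU Q hQ)).trans hσ).trans_lt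
      (hS.measure_ne_top U hU).lt_top).ne (hS.measure_ne_zero Q (hT hQ))
  have hlevel : ∀ k : ℕ, ∑ Q ∈ T with 2 ^ k ≤ meanDensity μ σ Q, μ Q ≤ Λ * (2 ^ k)⁻¹ * μ U := by
    intro k
    have hweak : 2 ^ k * ∑ Q ∈ T with 2 ^ k ≤ meanDensity μ σ Q, μ Q ≤ Λ * σ U := by
      refine hS.mul_sum_measure_le (fun Q hQ => hT (Finset.mem_filter.1 hQ).1)
        (fun Q hQ => hTU Q (Finset.mem_filter.1 hQ).1) fun Q hQ => ?_
      obtain ⟨hQT, hQ⟩ := Finset.mem_filter.1 hQ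
      rw [← hS.meanDensity_mul_measure (hT hQT) σ]
      gcongr
    rw [mul_right_comm, ← div_eq_mul_inv, ENNReal.le_div_iff_mul_le (by simp) (by simp), mul_comm]
    exact hweak.trans (by gcongr)
  calc ∑ Q ∈ T, meanDensity μ σ Q ^ r * μ Q
      ≤ ∑ Q ∈ T, μ Q + ∑' k : ℕ, ((2 : ℝ≥0∞) ^ r) ^ (k + 1)
          * ∑ Q ∈ T with 2 ^ k ≤ meanDensity μ σ Q, μ Q :=
        sum_rpow_mul_le_sum_add_tsum_two_pow hr T hfin _
    _ ≤ Λ * μ U + ∑' k : ℕ, ((2 : ℝ≥0∞) ^ r) ^ (k + 1) * (Λ * (2 ^ k)⁻¹ * μ U) := by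
        gcongr with k
        · simpa using hS.mul_sum_measure_le hT hTU (τ := 1) (σ := μ) (by simp)
        · exact hlevel k
    _ = packingConst Λ r * μ U := by
        simp only [packingConst_eq_add_tsum, add_mul, ← ENNReal.tsum_mul_right, mul_assoc]

lemma sum_meanDensity_rpow_mul_le (hS : IsCarlesonFamily μ Λ S) (σ : Measure X) {r : ℝ}
    (hr : 0 < r) (hU : U ∈ S) (hT : (T : Set (Set X)) ⊆ S) (hTU : ∀ Q ∈ T, Q ⊆ U) :
    ∑ Q ∈ T, meanDensity μ σ Q ^ r * μ Q ≤
      packingConst Λ r * (meanDensity μ σ U ^ r * μ U) := by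
  set m := meanDensity μ σ U
  have hσU : m * μ U = σ U := hS.meanDensity_mul_measure hU σ
  rcases eq_or_ne m 0 with h0 | h0
  · refine (Finset.sum_eq_zero fun Q hQ => ?_).trans_le zero_le
    have hσQ : σ Q = 0 := measure_mono_null (hTU Q hQ) (by rw [← hσU, h0, zero_mul])
    rw [meanDensity, hσQ, ENNReal.zero_div, ENNReal.zero_rpow_of_pos hr, zero_mul]
  rcases eq_or_ne m ∞ with htop | htop
  · have hK : packingConst Λ r ≠ 0 :=
      mul_ne_zero (one_pos.trans_le (hS.one_le_const hU)).ne' (by simp)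
    rw [htop, ENNReal.top_rpow_of_pos hr, ENNReal.top_mul (hS.measure_ne_zero U hU),
      ENNReal.mul_top hK]
    exact le_top
  have hnormalized := hS.sum_meanDensity_rpow_mul_le_of_le (σ := m⁻¹ • σ) hr hU hT hTU <| by
    rw [Measure.smul_apply, smul_eq_mul, ← hσU, ENNReal.inv_mul_cancel_left h0 htop]
  have hscale : ∀ Q, meanDensity μ σ Q ^ r = m ^ r * meanDensity μ (m⁻¹ • σ) Q ^ r := fun Q => by
    rw [← ENNReal.mul_rpow_of_nonneg _ _ hr.le, meanDensity, meanDensity, Measure.smul_apply,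
      smul_eq_mul, mul_div_assoc, ENNReal.mul_inv_cancel_left h0 htop]
  simp only [hscale, mul_assoc, ← Finset.mul_sum]
  rw [mul_left_comm]
  gcongr

/-- Products pack because, by Hölder's inequality, only the total exponent matters. -/
lemma sum_prod_meanDensity_rpow_mul_le (hS : IsCarlesonFamily μ Λ S) {ι : Type*} (I : Finset ι)
    (σ : ι → Measure X) {e : ι → ℝ} (he : ∀ i ∈ I, 0 ≤ e i) (hsum : 0 < ∑ i ∈ I, e i)
    (hU : U ∈ S) (hT : (T : Set (Set X)) ⊆ S) (hTU : ∀ Q ∈ T, Q ⊆ U) :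
    ∑ Q ∈ T, (∏ i ∈ I, meanDensity μ (σ i) Q ^ e i) * μ Q ≤
      packingConst Λ (∑ i ∈ I, e i) * ((∏ i ∈ I, meanDensity μ (σ i) U ^ e i) * μ U) := by
  refine (sum_prod_rpow_mul_le_prod_sum_rpow_mul T I _ _ he hsum).trans ?_
  set r := ∑ i ∈ I, e i with hr
  have hθ : ∀ i ∈ I, 0 ≤ e i / r := fun i hi => div_nonneg (he i hi) hsum.le
  have hθ1 : ∑ i ∈ I, e i / r = 1 := by rw [← Finset.sum_div, ← hr, div_self hsum.ne']
  calc ∏ i ∈ I, (∑ Q ∈ T, meanDensity μ (σ i) Q ^ r * μ Q) ^ (e i / r)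
      ≤ ∏ i ∈ I, (packingConst Λ r * (meanDensity μ (σ i) U ^ r * μ U)) ^ (e i / r) := by
        refine Finset.prod_le_prod' fun i hi => ENNReal.rpow_le_rpow ?_ (hθ i hi)
        exact hS.sum_meanDensity_rpow_mul_le (σ i) hsum hU hT hTU
    _ = ∏ i ∈ I, (packingConst Λ r * μ U) ^ (e i / r) * meanDensity μ (σ i) U ^ e i := by
        refine Finset.prod_congr rfl fun i hi => ?_
        rw [← mul_assoc, mul_right_comm, ENNReal.mul_rpow_of_nonneg _ _ (hθ i hi),
          ← ENNReal.rpow_mul, mul_div_cancel₀ _ hsum.ne']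
    _ = packingConst Λ r * ((∏ i ∈ I, meanDensity μ (σ i) U ^ e i) * μ U) := by
        rw [Finset.prod_mul_distrib, prod_rpow_eq_rpow_sum _ _ hθ, hθ1, ENNReal.rpow_one]
        ring

end IsCarlesonFamily

end Carleson

section IndicatorSums

variable {X : Type*}

/-- The finite sparse sum `∑_{Q ∈ T} c_Q χ_Q`. -/
noncomputable def sumIndicator (T : Finset (Set X)) (c : Set X → ℝ≥0∞) (x : X) : ℝ≥0∞ :=
  ∑ Q ∈ T, Q.indicator (fun _ => c Q) x

open scoped Classical in
lemma sumIndicator_rpow_le_of_isLaminar {T : Finset (Set X)} (hT : IsLaminar (T : Set (Set X)))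
    (c : Set X → ℝ≥0∞) {s : ℝ} (hs : 1 ≤ s) (x : X) :
    sumIndicator T c x ^ s ≤ ENNReal.ofReal s *
      ∑ Q ∈ T, Q.indicator (fun x => c Q * sumIndicator {R ∈ T | R ⊆ Q} c x ^ (s - 1)) x := by
  have hactive : ∀ T' : Finset (Set X), sumIndicator T' c x = ∑ Q ∈ T' with x ∈ Q, c Q :=
    fun T' => by simp only [sumIndicator, indicator_apply, Finset.sum_filter]
  have hchain : IsChain (· ≤ ·) (({Q ∈ T | x ∈ Q} : Finset (Set X)) : Set (Set X)) := by
    simpa only [Finset.coe_filter, Finset.mem_coe] using hT.isChain_setOf_mem x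
  rw [hactive]
  refine (sum_rpow_le_sum_mul_rpow_of_isChain hs c _ hchain).trans_eq ?_
  simp only [hactive, indicator_apply, ← Finset.sum_filter, Finset.filter_filter, and_comm]

variable [MeasurableSpace X]

lemma measurable_sumIndicator {T : Finset (Set X)} (hT : ∀ Q ∈ T, MeasurableSet Q)
    (c : Set X → ℝ≥0∞) : Measurable (sumIndicator T c) :=
  Finset.measurable_fun_sum T fun Q hQ => measurable_const.indicator (hT Q hQ)

open scoped Classical in
lemma lintegral_sumIndicator_rpow_le_of_one_le {T : Finset (Set X)}
    (hT : IsLaminar (T : Set (Set X))) (hmeas : ∀ Q ∈ T, MeasurableSet Q) (c : Set X → ℝ≥0∞)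
    {s : ℝ} (hs : 1 ≤ s) (ν : Measure X) :
    ∫⁻ x, sumIndicator T c x ^ s ∂ν ≤ ENNReal.ofReal s *
      ∑ Q ∈ T, c Q * ∫⁻ x, sumIndicator {R ∈ T | R ⊆ Q} c x ^ (s - 1) ∂ν := by
  have hF : ∀ Q, Measurable fun x => sumIndicator {R ∈ T | R ⊆ Q} c x ^ (s - 1) := fun Q =>
    (measurable_sumIndicator (fun R hR => hmeas R (Finset.mem_of_mem_filter R hR)) c).pow_const _
  have hterm : ∀ Q ∈ T, Measurable
      (Q.indicator fun x => c Q * sumIndicator {R ∈ T | R ⊆ Q} c x ^ (s - 1)) :=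
    fun Q hQ => ((hF Q).const_mul (c Q)).indicator (hmeas Q hQ)
  refine (lintegral_mono (sumIndicator_rpow_le_of_isLaminar hT c hs)).trans ?_
  rw [lintegral_const_mul _ (Finset.measurable_fun_sum T hterm), lintegral_finsetSum T hterm]
  gcongr with Q
  exact (lintegral_indicator_le _ Q).trans
    ((setLIntegral_le_lintegral Q _).trans_eq (lintegral_const_mul _ (hF Q)))

lemma lintegral_sumIndicator_rpow_le_of_le_one {T : Finset (Set X)}
    (hmeas : ∀ Q ∈ T, MeasurableSet Q) (c : Set X → ℝ≥0∞) {s : ℝ} (hs0 : 0 < s) (hs1 : s ≤ 1)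
    (ν : Measure X) : ∫⁻ x, sumIndicator T c x ^ s ∂ν ≤ ∑ Q ∈ T, c Q ^ s * ν Q := by
  have hpow : ∀ (Q : Set X) (x : X),
      Q.indicator (fun _ => c Q) x ^ s = Q.indicator (fun _ => c Q ^ s) x := fun Q x =>
    (congrFun (indicator_comp_of_zero (g := (· ^ s)) (ENNReal.zero_rpow_of_pos hs0)) x).symm
  calc ∫⁻ x, sumIndicator T c x ^ s ∂ν
      ≤ ∫⁻ x, ∑ Q ∈ T, Q.indicator (fun _ => c Q ^ s) x ∂ν := lintegral_mono fun x => by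
        simpa only [sumIndicator, hpow] using
          sum_rpow_le_sum_rpow hs0 hs1 (fun Q : Set X => Q.indicator (fun _ => c Q) x) T
    _ = ∑ Q ∈ T, c Q ^ s * ν Q := by
        rw [lintegral_finsetSum T fun Q hQ => measurable_const.indicator (hmeas Q hQ)]
        exact Finset.sum_congr rfl fun Q hQ => lintegral_indicator_const (hmeas Q hQ) _

lemma lintegral_tsum_indicator_rpow_le {S : Set (Set X)} (hcount : S.Countable)
    (hmeas : ∀ Q ∈ S, MeasurableSet Q) (c : Set X → ℝ≥0∞) {p : ℝ} (hp : 0 < p) (ν : Measure X)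
    {B : ℝ≥0∞} (hB : ∀ T : Finset (Set X), (T : Set (Set X)) ⊆ S →
      ∫⁻ x, sumIndicator T c x ^ p ∂ν ≤ B) :
    ∫⁻ x, (∑' Q : S, (Q : Set X).indicator (fun _ => c Q) x) ^ p ∂ν ≤ B := by
  have : Countable S := hcount.to_subtype
  let F (T : Finset S) : X → ℝ≥0∞ := sumIndicator (T.map (.subtype _)) c
  have hTS : ∀ T : Finset S, ((T.map (.subtype _) : Finset (Set X)) : Set (Set X)) ⊆ S :=
    fun T Q hQ => Finset.property_of_mem_map_subtype T hQ
  have hF : Monotone fun T x => F T x ^ p := fun T T' hTT' x => by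
    dsimp only [F, sumIndicator]
    gcongr
  have hsup : ∀ x, (∑' Q : S, (Q : Set X).indicator (fun _ => c Q) x) ^ p = ⨆ T, F T x ^ p := by
    intro x
    rw [ENNReal.tsum_eq_iSup_sum]
    simpa only [F, sumIndicator, Finset.sum_map, Function.Embedding.subtype_apply,
      ENNReal.orderIsoRpow_apply] using
      (ENNReal.orderIsoRpow p hp).map_iSup _
  simp only [hsup]
  rw [lintegral_iSup_directed (fun T => ((measurable_sumIndicator
    (fun Q hQ => hmeas Q (hTS T hQ)) c).pow_const p).aemeasurable) hF.directed_le]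
  exact iSup_le fun T => hB _ (hTS T)

end IndicatorSums

section BilinearMuckenhoupt

lemma rpow_add_mul_rpow_add_mul_rpow_add_le {A v a b : ℝ≥0∞} {α β θ x y z : ℝ}
    (hA : v * a ^ α * b ^ β ≤ A) (hα : 0 ≤ α) (hβ : 0 ≤ β) (hθ : 0 ≤ θ) (hx : 0 ≤ x)
    (hy : 0 ≤ y) (hz : 0 ≤ z) :
    v ^ (x + θ) * a ^ (y + α * θ) * b ^ (z + β * θ) ≤ A ^ θ * (v ^ x * a ^ y * b ^ z) :=
  calc v ^ (x + θ) * a ^ (y + α * θ) * b ^ (z + β * θ)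
      = (v * a ^ α * b ^ β) ^ θ * (v ^ x * a ^ y * b ^ z) := by
        rw [ENNReal.rpow_add_of_nonneg _ _ hx hθ, ENNReal.rpow_add_of_nonneg _ _ hy (by positivity),
          ENNReal.rpow_add_of_nonneg _ _ hz (by positivity), ENNReal.mul_rpow_of_nonneg _ _ hθ,
          ENNReal.mul_rpow_of_nonneg _ _ hθ, ENNReal.rpow_mul, ENNReal.rpow_mul]
        ring
    _ ≤ A ^ θ * (v ^ x * a ^ y * b ^ z) := by gcongr

variable {X : Type*} [MeasurableSpace X]

/-- The coefficient `⟨σ₁⟩_Q ⟨σ₂⟩_Q` of the bilinear sparse sum. -/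
noncomputable def bilinearMean (μ σ₁ σ₂ : Measure X) (Q : Set X) : ℝ≥0∞ :=
  meanDensity μ σ₁ Q * meanDensity μ σ₂ Q

/-- The joint Muckenhoupt condition `⟨ν⟩_Q ⟨σ₁⟩_Q ^ α ⟨σ₂⟩_Q ^ β ≤ A` over the members of `S`.
For `α = p / p₁'` and `β = p / p₂'` this is the bilinear `A_{\vec P}` condition. -/
def IsMuckenhouptBound (μ ν σ₁ σ₂ : Measure X) (α β : ℝ) (S : Set (Set X)) (A : ℝ≥0∞) : Prop :=
  ∀ Q ∈ S, meanDensity μ ν Q * meanDensity μ σ₁ Q ^ α * meanDensity μ σ₂ Q ^ β ≤ A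

/-- The quantity `(⟨σ₁⟩_Q ⟨σ₂⟩_Q) ^ s ⟨ν⟩_Q`, inflated by the factor
`(A / (⟨ν⟩_Q ⟨σ₁⟩_Q ^ α ⟨σ₂⟩_Q ^ β)) ^ (t * s)`, which is at least `1` under the Muckenhoupt
condition. The inflation lowers the homogeneity in the means to `1 + s * (2 - t * (1 + α + β))`. -/
noncomputable def majorant (μ ν σ₁ σ₂ : Measure X) (α β t : ℝ) (A : ℝ≥0∞) (s : ℝ) (Q : Set X) :
    ℝ≥0∞ :=
  A ^ (t * s) * (meanDensity μ ν Q ^ (1 - t * s) * meanDensity μ σ₁ Q ^ (s * (1 - t * α)) *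
    meanDensity μ σ₂ Q ^ (s * (1 - t * β)))

/-- The localized moments of order `s` of the sums `∑_{Q ∈ T} ⟨σ₁⟩_Q ⟨σ₂⟩_Q χ_Q` over finite
`T ⊆ S` with all members inside a fixed `U ∈ S` are at most `C * majorant U * μ U`. -/
def HasLocalMomentBound (μ ν σ₁ σ₂ : Measure X) (α β t : ℝ) (S : Set (Set X)) (A : ℝ≥0∞) (s : ℝ)
    (C : ℝ≥0∞) : Prop :=
  ∀ T : Finset (Set X), (T : Set (Set X)) ⊆ S → ∀ U ∈ S, (∀ Q ∈ T, Q ⊆ U) →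
    ∫⁻ x, sumIndicator T (bilinearMean μ σ₁ σ₂) x ^ s ∂ν ≤
      C * (majorant μ ν σ₁ σ₂ α β t A s U * μ U)

variable {μ ν σ₁ σ₂ : Measure X} {α β t s p : ℝ} {A Λ C : ℝ≥0∞} {S : Set (Set X)} {Q U : Set X}
  {T : Finset (Set X)}

lemma IsMuckenhouptBound.bilinearMean_rpow_mul_le_majorant
    (hA : IsMuckenhouptBound μ ν σ₁ σ₂ α β S A) (hα : 0 ≤ α) (hβ : 0 ≤ β) (ht : 0 ≤ t)
    (hs : 0 ≤ s) (hts : t * s ≤ 1) (htα : t * α ≤ 1) (htβ : t * β ≤ 1) (hQ : Q ∈ S) :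
    bilinearMean μ σ₁ σ₂ Q ^ s * meanDensity μ ν Q ≤ majorant μ ν σ₁ σ₂ α β t A s Q := by
  have key := rpow_add_mul_rpow_add_mul_rpow_add_le (hA Q hQ) hα hβ (mul_nonneg ht hs)
    (sub_nonneg.2 hts) (mul_nonneg hs (sub_nonneg.2 htα)) (mul_nonneg hs (sub_nonneg.2 htβ))
  rw [sub_add_cancel, ENNReal.rpow_one, show s * (1 - t * α) + α * (t * s) = s by ring,
    show s * (1 - t * β) + β * (t * s) = s by ring] at key
  refine le_of_eq_of_le ?_ key
  rw [bilinearMean, ENNReal.mul_rpow_of_nonneg _ _ hs]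
  ring

lemma bilinearMean_mul_majorant_sub_one (hs : 1 ≤ s) (htα : t * α ≤ 1) (htβ : t * β ≤ 1)
    (Q : Set X) :
    bilinearMean μ σ₁ σ₂ Q * majorant μ ν σ₁ σ₂ α β t A (s - 1) Q =
      A ^ (t * (s - 1)) * (meanDensity μ ν Q ^ (1 - t * (s - 1)) *
        meanDensity μ σ₁ Q ^ (1 + (s - 1) * (1 - t * α)) *
        meanDensity μ σ₂ Q ^ (1 + (s - 1) * (1 - t * β))) := by
  have hs' : 0 ≤ s - 1 := sub_nonneg.2 hs
  rw [ENNReal.rpow_add_of_nonneg _ _ zero_le_one (mul_nonneg hs' (sub_nonneg.2 htα)),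
    ENNReal.rpow_add_of_nonneg _ _ zero_le_one (mul_nonneg hs' (sub_nonneg.2 htβ)),
    ENNReal.rpow_one, ENNReal.rpow_one, majorant, bilinearMean]
  ring

lemma IsMuckenhouptBound.bilinearMean_mul_majorant_sub_one_le
    (hA : IsMuckenhouptBound μ ν σ₁ σ₂ α β S A) (hα : 0 ≤ α) (hβ : 0 ≤ β) (ht : 0 ≤ t)
    (hs : 1 ≤ s) (hts : t * s ≤ 1) (htα : t * α ≤ 1) (htβ : t * β ≤ 1) (hQ : Q ∈ S) :
    bilinearMean μ σ₁ σ₂ Q * majorant μ ν σ₁ σ₂ α β t A (s - 1) Q ≤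
      majorant μ ν σ₁ σ₂ α β t A s Q := by
  have hs0 : 0 ≤ s := zero_le_one.trans hs
  have key := rpow_add_mul_rpow_add_mul_rpow_add_le (hA Q hQ) hα hβ ht (sub_nonneg.2 hts)
    (mul_nonneg hs0 (sub_nonneg.2 htα)) (mul_nonneg hs0 (sub_nonneg.2 htβ))
  have hsplit : A ^ (t * s) = A ^ (t * (s - 1)) * A ^ t := by
    rw [← ENNReal.rpow_add_of_nonneg _ _ (mul_nonneg ht (sub_nonneg.2 hs)) ht]
    ring_nf
  rw [bilinearMean_mul_majorant_sub_one hs htα htβ, majorant, hsplit, mul_assoc (A ^ (t * (s - 1))),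
    show 1 - t * (s - 1) = 1 - t * s + t by ring,
    show 1 + (s - 1) * (1 - t * α) = s * (1 - t * α) + α * t by ring,
    show 1 + (s - 1) * (1 - t * β) = s * (1 - t * β) + β * t by ring]
  gcongr

lemma IsMuckenhouptBound.bilinearMean_mul_majorant_sub_one_le_mul
    (hA : IsMuckenhouptBound μ ν σ₁ σ₂ α β S A) (hα : 0 ≤ α) (hβ : 0 ≤ β) (ht : 0 ≤ t)
    (hp : 1 ≤ p) (htp : t * (p - 1) ≤ 1) (htα : t * α ≤ 1) (htβ : t * β ≤ 1) (hαp : α ≤ p)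
    (hβp : β ≤ p) (hQ : Q ∈ S) :
    bilinearMean μ σ₁ σ₂ Q * majorant μ ν σ₁ σ₂ α β t A (p - 1) Q ≤
      A * (meanDensity μ σ₁ Q ^ (p - α) * meanDensity μ σ₂ Q ^ (p - β)) := by
  have hθ : 0 ≤ 1 - t * (p - 1) := sub_nonneg.2 htp
  have key := rpow_add_mul_rpow_add_mul_rpow_add_le (hA Q hQ) hα hβ hθ le_rfl
    (sub_nonneg.2 hαp) (sub_nonneg.2 hβp)
  have hsplit : A = A ^ (t * (p - 1)) * A ^ (1 - t * (p - 1)) := by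
    rw [← ENNReal.rpow_add_of_nonneg _ _ (mul_nonneg ht (sub_nonneg.2 hp)) hθ, add_sub_cancel,
      ENNReal.rpow_one]
  rw [zero_add, ENNReal.rpow_zero, one_mul,
    show p - α + α * (1 - t * (p - 1)) = 1 + (p - 1) * (1 - t * α) by ring,
    show p - β + β * (1 - t * (p - 1)) = 1 + (p - 1) * (1 - t * β) by ring] at key
  rw [bilinearMean_mul_majorant_sub_one hp htα htβ]
  conv_rhs => rw [hsplit, mul_assoc]
  gcongr

lemma IsMuckenhouptBound.bilinearMean_rpow_mul_le_mul
    (hA : IsMuckenhouptBound μ ν σ₁ σ₂ α β S A) (hα : 0 ≤ α) (hβ : 0 ≤ β) (hαp : α ≤ p)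
    (hβp : β ≤ p) (hQ : Q ∈ S) :
    bilinearMean μ σ₁ σ₂ Q ^ p * meanDensity μ ν Q ≤
      A * (meanDensity μ σ₁ Q ^ (p - α) * meanDensity μ σ₂ Q ^ (p - β)) := by
  have key := rpow_add_mul_rpow_add_mul_rpow_add_le (hA Q hQ) hα hβ zero_le_one le_rfl
    (sub_nonneg.2 hαp) (sub_nonneg.2 hβp)
  simp only [zero_add, mul_one, sub_add_cancel, ENNReal.rpow_one, ENNReal.rpow_zero, one_mul] at key
  refine le_of_eq_of_le ?_ key
  rw [bilinearMean, ENNReal.mul_rpow_of_nonneg _ _ (hα.trans hαp)]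
  ring

lemma IsCarlesonFamily.sum_majorant_mul_le (hS : IsCarlesonFamily μ Λ S) (hs : 0 ≤ s)
    (hts : t * s < 1) (htα : t * α ≤ 1) (htβ : t * β ≤ 1) (hU : U ∈ S)
    (hT : (T : Set (Set X)) ⊆ S) (hTU : ∀ Q ∈ T, Q ⊆ U) :
    ∑ Q ∈ T, majorant μ ν σ₁ σ₂ α β t A s Q * μ Q ≤
      packingConst Λ (1 + s * (2 - t * (1 + α + β))) *
        (majorant μ ν σ₁ σ₂ α β t A s U * μ U) := by
  have hα' : 0 ≤ s * (1 - t * α) := mul_nonneg hs (sub_nonneg.2 htα)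
  have hβ' : 0 ≤ s * (1 - t * β) := mul_nonneg hs (sub_nonneg.2 htβ)
  have hpack := hS.sum_prod_meanDensity_rpow_mul_le Finset.univ ![ν, σ₁, σ₂]
    (e := ![1 - t * s, s * (1 - t * α), s * (1 - t * β)])
    (by simp [Fin.forall_fin_succ, hts.le, hα', hβ'])
    (by simp only [Fin.sum_univ_three, Matrix.cons_val]; linarith) hU hT hTU
  simp only [Fin.sum_univ_three, Fin.prod_univ_three, Matrix.cons_val] at hpack
  rw [show 1 - t * s + s * (1 - t * α) + s * (1 - t * β) = 1 + s * (2 - t * (1 + α + β)) by ring]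
    at hpack
  simp only [majorant, mul_assoc (A ^ (t * s)), ← Finset.mul_sum]
  rw [mul_left_comm]
  gcongr

lemma HasLocalMomentBound.of_le_one (hS : IsCarlesonFamily μ Λ S)
    (hA : IsMuckenhouptBound μ ν σ₁ σ₂ α β S A) (hα : 0 ≤ α) (hβ : 0 ≤ β) (ht : 0 ≤ t)
    (hs0 : 0 < s) (hs1 : s ≤ 1) (hts : t * s < 1) (htα : t * α ≤ 1) (htβ : t * β ≤ 1) :
    HasLocalMomentBound μ ν σ₁ σ₂ α β t S A s
      (packingConst Λ (1 + s * (2 - t * (1 + α + β)))) := by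
  intro T hT U hU hTU
  calc ∫⁻ x, sumIndicator T (bilinearMean μ σ₁ σ₂) x ^ s ∂ν
      ≤ ∑ Q ∈ T, bilinearMean μ σ₁ σ₂ Q ^ s * ν Q :=
        lintegral_sumIndicator_rpow_le_of_le_one (fun Q hQ => hS.measurableSet Q (hT hQ)) _ hs0
          hs1 ν
    _ ≤ ∑ Q ∈ T, majorant μ ν σ₁ σ₂ α β t A s Q * μ Q := by
        refine Finset.sum_le_sum fun Q hQ => ?_
        rw [← hS.meanDensity_mul_measure (hT hQ) ν, ← mul_assoc]
        gcongr
        exact hA.bilinearMean_rpow_mul_le_majorant hα hβ ht hs0.le hts.le htα htβ (hT hQ)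
    _ ≤ _ := hS.sum_majorant_mul_le hs0.le hts htα htβ hU hT hTU

lemma HasLocalMomentBound.lintegral_sumIndicator_rpow_le
    (hC : HasLocalMomentBound μ ν σ₁ σ₂ α β t S A (s - 1) C) (hS : IsCarlesonFamily μ Λ S)
    (hs : 1 ≤ s) (hT : (T : Set (Set X)) ⊆ S) :
    ∫⁻ x, sumIndicator T (bilinearMean μ σ₁ σ₂) x ^ s ∂ν ≤ ENNReal.ofReal s * C *
      ∑ Q ∈ T, bilinearMean μ σ₁ σ₂ Q * majorant μ ν σ₁ σ₂ α β t A (s - 1) Q * μ Q := by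
  classical
  refine (lintegral_sumIndicator_rpow_le_of_one_le (hS.isLaminar.mono hT)
    (fun Q hQ => hS.measurableSet Q (hT hQ)) _ hs ν).trans ?_
  rw [mul_assoc, Finset.mul_sum _ _ C]
  gcongr ENNReal.ofReal s * ?_
  refine Finset.sum_le_sum fun Q hQ => ?_
  rw [mul_assoc, mul_left_comm]
  gcongr
  convert hC {R ∈ T | R ⊆ Q} (fun R hR => hT (Finset.mem_of_mem_filter R hR)) Q (hT hQ)
    fun R hR => (Finset.mem_filter.1 hR).2

lemma HasLocalMomentBound.of_sub_one (hC : HasLocalMomentBound μ ν σ₁ σ₂ α β t S A (s - 1) C)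
    (hS : IsCarlesonFamily μ Λ S) (hA : IsMuckenhouptBound μ ν σ₁ σ₂ α β S A) (hα : 0 ≤ α)
    (hβ : 0 ≤ β) (ht : 0 ≤ t) (hs : 1 ≤ s) (hts : t * s < 1) (htα : t * α ≤ 1)
    (htβ : t * β ≤ 1) :
    HasLocalMomentBound μ ν σ₁ σ₂ α β t S A s
      (ENNReal.ofReal s * C * packingConst Λ (1 + s * (2 - t * (1 + α + β)))) := by
  intro T hT U hU hTU
  refine (hC.lintegral_sumIndicator_rpow_le hS hs hT).trans ?_
  rw [mul_assoc (ENNReal.ofReal s * C)]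
  gcongr
  refine le_trans ?_ (hS.sum_majorant_mul_le (zero_le_one.trans hs) hts htα htβ hU hT hTU)
  gcongr with Q hQ
  exact hA.bilinearMean_mul_majorant_sub_one_le hα hβ ht hs hts.le htα htβ (hT hQ)

universe u

/-- The bounds hold up to order `1` by subadditivity and propagate upwards in unit steps. -/
lemma exists_hasLocalMomentBound {α β t : ℝ} (hα : 0 ≤ α) (hβ : 0 ≤ β) (ht : 0 ≤ t)
    (htα : t * α ≤ 1) (htβ : t * β ≤ 1) (hgain : 2 < t * (1 + α + β)) {Λ : ℝ≥0∞} (hΛ : Λ ≠ ∞)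
    {s : ℝ} (hs : 0 < s) (hts : t * s < 1) :
    ∃ C ≠ ∞, ∀ {X : Type u} [MeasurableSpace X] {μ ν σ₁ σ₂ : Measure X} {S : Set (Set X)}
      {A : ℝ≥0∞}, IsCarlesonFamily μ Λ S → IsMuckenhouptBound μ ν σ₁ σ₂ α β S A →
        HasLocalMomentBound μ ν σ₁ σ₂ α β t S A s C := by
  have hpack : ∀ {s : ℝ}, 0 < s → packingConst Λ (1 + s * (2 - t * (1 + α + β))) ≠ ∞ := fun hs =>
    packingConst_ne_top hΛ (by linarith [mul_neg_of_pos_of_neg hs (sub_neg.2 hgain)])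
  obtain ⟨N, hN⟩ := exists_nat_ge (s - 1)
  rw [sub_le_iff_le_add] at hN
  induction N generalizing s with
  | zero =>
    exact ⟨_, hpack hs, fun hS hA =>
      .of_le_one hS hA hα hβ ht hs (by simpa using hN) hts htα htβ⟩
  | succ N ih =>
    rcases le_or_gt s 1 with hs1 | hs1
    · exact ⟨_, hpack hs, fun hS hA => .of_le_one hS hA hα hβ ht hs hs1 hts htα htβ⟩
    obtain ⟨C, hC, hbound⟩ := ih (sub_pos.2 hs1) (by linarith) (by push_cast at hN; linarith)
    exact ⟨_, ENNReal.mul_ne_top (ENNReal.mul_ne_top ENNReal.ofReal_ne_top hC) (hpack hs),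
      fun hS hA => (hbound hS hA).of_sub_one hS hA hα hβ ht hs1.le hts htα htβ⟩

lemma lintegral_sumIndicator_bilinearMean_rpow_le_of_le_one (hS : IsCarlesonFamily μ Λ S)
    (hA : IsMuckenhouptBound μ ν σ₁ σ₂ α β S A) (hα : 0 ≤ α) (hβ : 0 ≤ β) (hαp : α ≤ p)
    (hβp : β ≤ p) (hp0 : 0 < p) (hp1 : p ≤ 1) (hT : (T : Set (Set X)) ⊆ S) :
    ∫⁻ x, sumIndicator T (bilinearMean μ σ₁ σ₂) x ^ p ∂ν ≤
      A * ∑ Q ∈ T, meanDensity μ σ₁ Q ^ (p - α) * meanDensity μ σ₂ Q ^ (p - β) * μ Q := by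
  refine (lintegral_sumIndicator_rpow_le_of_le_one (fun Q hQ => hS.measurableSet Q (hT hQ)) _
    hp0 hp1 ν).trans ?_
  rw [Finset.mul_sum]
  refine Finset.sum_le_sum fun Q hQ => ?_
  rw [← hS.meanDensity_mul_measure (hT hQ) ν, ← mul_assoc, ← mul_assoc]
  gcongr ?_ * μ Q
  exact hA.bilinearMean_rpow_mul_le_mul hα hβ hαp hβp (hT hQ)

lemma HasLocalMomentBound.lintegral_sumIndicator_rpow_le_mul
    (hC : HasLocalMomentBound μ ν σ₁ σ₂ α β t S A (p - 1) C) (hS : IsCarlesonFamily μ Λ S)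
    (hA : IsMuckenhouptBound μ ν σ₁ σ₂ α β S A) (hα : 0 ≤ α) (hβ : 0 ≤ β) (ht : 0 ≤ t)
    (hp : 1 ≤ p) (htp : t * (p - 1) ≤ 1) (htα : t * α ≤ 1) (htβ : t * β ≤ 1) (hαp : α ≤ p)
    (hβp : β ≤ p) (hT : (T : Set (Set X)) ⊆ S) :
    ∫⁻ x, sumIndicator T (bilinearMean μ σ₁ σ₂) x ^ p ∂ν ≤ ENNReal.ofReal p * C * (A *
      ∑ Q ∈ T, meanDensity μ σ₁ Q ^ (p - α) * meanDensity μ σ₂ Q ^ (p - β) * μ Q) := by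
  refine (hC.lintegral_sumIndicator_rpow_le hS hp hT).trans ?_
  gcongr
  rw [Finset.mul_sum]
  refine Finset.sum_le_sum fun Q hQ => ?_
  rw [← mul_assoc A]
  gcongr ?_ * μ Q
  exact hA.bilinearMean_mul_majorant_sub_one_le_mul hα hβ ht hp htp htα htβ hαp hβp (hT hQ)

lemma exists_inflation_exponent {α β p : ℝ} (hα : 0 ≤ α) (hαβ : |α - β| < 1)
    (hp : 2 * p < 3 + α + β) :
    ∃ t, 0 < t ∧ t * (p - 1) < 1 ∧ t * α < 1 ∧ t * β < 1 ∧ 2 < t * (1 + α + β) := by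
  obtain ⟨hlo, hhi⟩ := abs_lt.1 hαβ
  have hm : max (p - 1) (max α β) < (1 + α + β) / 2 := by
    simp only [max_lt_iff]; exact ⟨by linarith, by linarith, by linarith⟩
  obtain ⟨τ, hτm, hτ⟩ := exists_between hm
  simp only [max_lt_iff] at hτm
  have hτ0 : 0 < τ := hα.trans_lt hτm.2.1
  refine ⟨τ⁻¹, inv_pos.2 hτ0, ?_, ?_, ?_, ?_⟩
  · rw [inv_mul_lt_one₀ hτ0]; exact hτm.1
  · rw [inv_mul_lt_one₀ hτ0]; exact hτm.2.1
  · rw [inv_mul_lt_one₀ hτ0]; exact hτm.2.2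
  · rw [lt_inv_mul_iff₀ hτ0]; linarith

lemma exists_lintegral_sumIndicator_bilinearMean_rpow_le {α β p : ℝ} (hα : 0 ≤ α) (hβ : 0 ≤ β)
    (hαp : α ≤ p) (hβp : β ≤ p) (hαβ : |α - β| < 1) (hp0 : 0 < p) (hp : 2 * p < 3 + α + β)
    {Λ : ℝ≥0∞} (hΛ : Λ ≠ ∞) :
    ∃ C ≠ ∞, ∀ {X : Type u} [MeasurableSpace X] {μ ν σ₁ σ₂ : Measure X} {S : Set (Set X)}
      {A : ℝ≥0∞}, IsCarlesonFamily μ Λ S → IsMuckenhouptBound μ ν σ₁ σ₂ α β S A →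
        ∀ T : Finset (Set X), (T : Set (Set X)) ⊆ S →
          ∫⁻ x, sumIndicator T (bilinearMean μ σ₁ σ₂) x ^ p ∂ν ≤ C * (A *
            ∑ Q ∈ T, meanDensity μ σ₁ Q ^ (p - α) * meanDensity μ σ₂ Q ^ (p - β) * μ Q) := by
  rcases le_or_gt p 1 with hp1 | hp1
  · refine ⟨1, ENNReal.one_ne_top, fun hS hA T hT => ?_⟩
    rw [one_mul]
    exact lintegral_sumIndicator_bilinearMean_rpow_le_of_le_one hS hA hα hβ hαp hβp hp0 hp1 hT
  obtain ⟨t, ht, htp, htα, htβ, hgain⟩ := exists_inflation_exponent hα hαβ hp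
  obtain ⟨C, hC, hbound⟩ :=
    exists_hasLocalMomentBound hα hβ ht.le htα.le htβ.le hgain hΛ (sub_pos.2 hp1) htp
  exact ⟨ENNReal.ofReal p * C, ENNReal.mul_ne_top ENNReal.ofReal_ne_top hC, fun hS hA T hT =>
    (hbound hS hA).lintegral_sumIndicator_rpow_le_mul hS hA hα hβ ht.le hp1.le htp.le htα.le
      htβ.le hαp hβp hT⟩

theorem exists_lintegral_tsum_bilinearMean_rpow_le {α β p : ℝ} (hα : 0 ≤ α) (hβ : 0 ≤ β)
    (hαp : α ≤ p) (hβp : β ≤ p) (hαβ : |α - β| < 1) (hp0 : 0 < p) (hp : 2 * p < 3 + α + β)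
    {Λ : ℝ≥0∞} (hΛ : Λ ≠ ∞) :
    ∃ C ≠ ∞, ∀ {X : Type u} [MeasurableSpace X] {μ ν σ₁ σ₂ : Measure X} {S : Set (Set X)}
      {A : ℝ≥0∞}, S.Countable → IsCarlesonFamily μ Λ S → IsMuckenhouptBound μ ν σ₁ σ₂ α β S A →
        ∫⁻ x, (∑' Q : S, (Q : Set X).indicator (fun _ => bilinearMean μ σ₁ σ₂ Q) x) ^ p ∂ν ≤
          C * (A * ∑' Q : S,
            meanDensity μ σ₁ Q ^ (p - α) * meanDensity μ σ₂ Q ^ (p - β) * μ Q) := by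
  obtain ⟨C, hC, hbound⟩ :=
    exists_lintegral_sumIndicator_bilinearMean_rpow_le hα hβ hαp hβp hαβ hp0 hp hΛ
  refine ⟨C, hC, fun {X} _ {μ ν σ₁ σ₂ S A} hcount hS hA => ?_⟩
  refine lintegral_tsum_indicator_rpow_le hcount hS.measurableSet _ hp0 ν fun T hT => ?_
  refine (hbound hS hA T hT).trans ?_
  gcongr
  rw [← Finset.tsum_subtype']
  exact ENNReal.tsum_mono_subtype
    (fun Q => meanDensity μ σ₁ Q ^ (p - α) * meanDensity μ σ₂ Q ^ (p - β) * μ Q) hT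

end BilinearMuckenhoupt

section Cubes

variable {n : ℕ} {Q : Set (Rn n)} {S : Set (Set (Rn n))}

lemma IsCube.exists_eq_pi_Ico (hQ : IsCube Q) :
    ∃ (c : Rn n) (h : ℝ), 0 < h ∧ Q = univ.pi fun i => Ico (c i) (c i + h) := by
  obtain ⟨h, hh, c, rfl⟩ := hQ
  exact ⟨c, h, hh, by ext x; simp [Set.mem_pi]⟩

lemma IsCube.measurableSet (hQ : IsCube Q) : MeasurableSet Q := by
  obtain ⟨c, h, -, rfl⟩ := hQ.exists_eq_pi_Ico
  exact .univ_pi fun _ => measurableSet_Ico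

lemma IsCube.volume_eq_pow (hQ : IsCube Q) : ∃ h : ℝ, 0 < h ∧ volume Q = ENNReal.ofReal h ^ n := by
  obtain ⟨c, h, hh, rfl⟩ := hQ.exists_eq_pi_Ico
  exact ⟨h, hh, by simp [Real.volume_pi_Ico]⟩

lemma IsCube.volume_ne_zero (hQ : IsCube Q) : volume Q ≠ 0 := by
  obtain ⟨h, hh, hvol⟩ := hQ.volume_eq_pow
  rw [hvol]
  exact pow_ne_zero n (ENNReal.ofReal_pos.2 hh).ne'

lemma IsCube.volume_ne_top (hQ : IsCube Q) : volume Q ≠ ∞ := by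
  obtain ⟨h, -, hvol⟩ := hQ.volume_eq_pow
  rw [hvol]
  exact ENNReal.pow_ne_top ENNReal.ofReal_ne_top

lemma IsSparse.sum_volume_le (hS : IsSparse S) {T : Finset (Set (Rn n))}
    (hT : (T : Set (Set (Rn n))) ⊆ S) : ∑ Q ∈ T, volume Q ≤ 2 * volume (⋃ Q ∈ T, Q) := by
  obtain ⟨E, hE, hdisj⟩ := hS
  calc ∑ Q ∈ T, volume Q ≤ ∑ Q ∈ T, 2 * volume (E Q) :=
        Finset.sum_le_sum fun Q hQ => (hE Q (hT hQ)).2.2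
    _ = 2 * volume (⋃ Q ∈ T, E Q) := by
        rw [← Finset.mul_sum, measure_biUnion_finset (hdisj.mono hT) fun Q hQ => (hE Q (hT hQ)).2.1]
    _ ≤ 2 * volume (⋃ Q ∈ T, Q) := by
        gcongr with Q hQ
        exact (hE Q (hT hQ)).1

lemma IsSparse.isCarlesonFamily (hS : IsSparse S) (hcube : ∀ Q ∈ S, IsCube Q)
    (hnest : ∀ Q ∈ S, ∀ R ∈ S, Q ⊆ R ∨ R ⊆ Q ∨ Q ∩ R = ∅) : IsCarlesonFamily volume 2 S where
  measurableSet Q hQ := (hcube Q hQ).measurableSet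
  measure_ne_zero Q hQ := (hcube Q hQ).volume_ne_zero
  measure_ne_top Q hQ := (hcube Q hQ).volume_ne_top
  isLaminar := by simpa only [IsLaminar, disjoint_iff_inter_eq_empty] using hnest
  sum_measure_le _ hT := hS.sum_volume_le hT

lemma IsCube.avg_eq_meanDensity (hQ : IsCube Q) (w : Rn n → ℝ≥0∞) :
    avg w Q = meanDensity volume (volume.withDensity w) Q := by
  rw [avg, mass, meanDensity, withDensity_apply w hQ.measurableSet]

lemma isMuckenhouptBound_APconst (p p1 p2 : ℝ) (w1 w2 : Rn n → ℝ≥0∞)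
    (hcube : ∀ Q ∈ S, IsCube Q) :
    IsMuckenhouptBound volume (volume.withDensity (vweight p p1 p2 w1 w2))
      (volume.withDensity (dualW p1 w1)) (volume.withDensity (dualW p2 w2)) (p / conj p1)
      (p / conj p2) S (APconst p p1 p2 w1 w2) := by
  intro Q hQ
  simp only [← (hcube Q hQ).avg_eq_meanDensity]
  exact le_iSup₂_of_le Q (hcube Q hQ) le_rfl

lemma measurable_vweight (p p1 p2 : ℝ) {w1 w2 : Rn n → ℝ≥0∞} (h1 : Measurable w1)
    (h2 : Measurable w2) : Measurable (vweight p p1 p2 w1 w2) :=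
  (h1.pow_const _).mul (h2.pow_const _)

lemma lpNorm_le_of_lintegral_withDensity_le {g v : Rn n → ℝ≥0∞} (hv : Measurable v)
    (hg : Measurable g) {p : ℝ} (hp : 0 < p) {A B C : ℝ≥0∞}
    (h : ∫⁻ x, g x ^ p ∂volume.withDensity v ≤ C * (A * B)) :
    _root_.lpNorm g p v ≤ C ^ (1 / p) * A ^ (1 / p) * B ^ (1 / p) := by
  have hp' : 0 ≤ 1 / p := (one_div_pos.2 hp).le
  rw [lintegral_withDensity_eq_lintegral_mul _ hv (hg.pow_const p)] at h
  rw [_root_.lpNorm, mul_assoc, ← ENNReal.mul_rpow_of_nonneg _ _ hp',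
    ← ENNReal.mul_rpow_of_nonneg _ _ hp']
  gcongr
  simpa only [Pi.mul_apply, mul_comm] using h

lemma measurable_tsum_indicator {X : Type*} [MeasurableSpace X] {S : Set (Set X)}
    (hcount : S.Countable) (hmeas : ∀ Q ∈ S, MeasurableSet Q) (c : Set X → ℝ≥0∞) :
    Measurable fun x => ∑' Q : S, (Q : Set X).indicator (fun _ => c Q) x := by
  have : Countable S := hcount.to_subtype
  exact Measurable.tsum fun Q => measurable_const.indicator (hmeas Q Q.2)

end Cubes

lemma div_conj {p q : ℝ} (hq : q ≠ 0) : p / conj q = p - p / q := by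
  rcases eq_or_ne q 1 with rfl | hq1
  · simp [conj]
  have := sub_ne_zero.2 hq1
  rw [conj]
  field_simp

lemma div_add_div_eq_one {p p1 p2 : ℝ} (hp0 : p ≠ 0) (hp : 1 / p = 1 / p1 + 1 / p2) :
    p / p1 + p / p2 = 1 := by
  rw [div_eq_mul_one_div, div_eq_mul_one_div p p2, ← mul_add, ← hp, mul_one_div_cancel hp0]

theorem statement6_general (p p1 p2 : ℝ) (hp1 : 1 < p1) (hp2 : 1 < p2)
    (hp : 1 / p = 1 / p1 + 1 / p2) :
    ∃ C : ℝ≥0∞, C ≠ ∞ ∧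
      ∀ {n : ℕ} (w1 w2 : Rn n → ℝ≥0∞), Measurable w1 → Measurable w2 →
        ∀ S : Set (Set (Rn n)), S.Countable → (∀ Q ∈ S, IsCube Q) →
          (∀ Q ∈ S, ∀ R ∈ S, Q ⊆ R ∨ R ⊆ Q ∨ Q ∩ R = ∅) → IsSparse S →
          _root_.lpNorm
              (fun x => ∑' Q : S,
                Set.indicator (Q : Set (Rn n))
                  (fun _ => avg (dualW p1 w1) Q * avg (dualW p2 w2) Q) x) p
              (vweight p p1 p2 w1 w2) ≤
            C * APconst p p1 p2 w1 w2 ^ (1 / p) *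
              (∑' Q : S,
                avg (dualW p1 w1) (Q : Set (Rn n)) ^ (p / p1) *
                  avg (dualW p2 w2) (Q : Set (Rn n)) ^ (p / p2) *
                  volume (Q : Set (Rn n))) ^ (1 / p) := by
  have hp0 : 0 < p := one_div_pos.1 (by rw [hp]; positivity)
  have hsum := div_add_div_eq_one hp0.ne' hp
  have h1 : p / p1 < p := div_lt_self hp0 hp1
  have h2 : p / p2 < p := div_lt_self hp0 hp2
  have h1' : 0 < p / p1 := by positivity
  have h2' : 0 < p / p2 := by positivity
  have hα := div_conj (p := p) (q := p1) (by positivity)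
  have hβ := div_conj (p := p) (q := p2) (by positivity)
  obtain ⟨C, hC, hbound⟩ := exists_lintegral_tsum_bilinearMean_rpow_le
    (α := p / conj p1) (β := p / conj p2) (p := p) (Λ := 2) (by linarith) (by linarith)
    (by linarith) (by linarith) (abs_lt.2 ⟨by linarith, by linarith⟩) hp0 (by linarith)
    ENNReal.ofNat_ne_top
  refine ⟨C ^ (1 / p), ENNReal.rpow_ne_top_of_nonneg (by positivity) hC,
    fun {n} w1 w2 hw1 hw2 S hcount hcube hnest hS => ?_⟩
  have hfam := hS.isCarlesonFamily hcube hnest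
  have key := hbound hcount hfam (isMuckenhouptBound_APconst p p1 p2 w1 w2 hcube)
  have havg : ∀ (w : Rn n → ℝ≥0∞) (Q : S), meanDensity volume (volume.withDensity w) Q = avg w Q :=
    fun w Q => ((hcube Q Q.2).avg_eq_meanDensity w).symm
  simp only [bilinearMean, havg, hα, hβ, _root_.sub_sub_cancel] at key
  exact lpNorm_le_of_lintegral_withDensity_le (measurable_vweight p p1 p2 hw1 hw2)
    (measurable_tsum_indicator hcount hfam.measurableSet
      fun Q => avg (dualW p1 w1) Q * avg (dualW p2 w2) Q) hp0 key

/-- `L^p(v_{\vec w})` bound for `∑_{Q∈S} ⟨σ₁⟩_Q ⟨σ₂⟩_Q χ_Q`. -/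
theorem statement6 {n : ℕ} (p p1 p2 : ℝ)
    (hp1 : 1 < p1) (hp2 : 1 < p2) (hp : 1 / p = 1 / p1 + 1 / p2) (hp0 : 1 < p) :
    ∃ C : ℝ≥0∞, C ≠ ∞ ∧
      ∀ w1 w2 : Rn n → ℝ≥0∞, IsWeight w1 → IsWeight w2 →
        APconst p p1 p2 w1 w2 ≠ ∞ →
        ∀ S : Set (Set (Rn n)), S.Countable → (∀ Q ∈ S, IsCube Q) →
          (∀ Q ∈ S, ∀ R ∈ S, Q ⊆ R ∨ R ⊆ Q ∨ Q ∩ R = ∅) → IsSparse S →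
          lpNorm
              (fun x => ∑' Q : S,
                Set.indicator (Q : Set (Rn n))
                  (fun _ => avg (dualW p1 w1) Q * avg (dualW p2 w2) Q) x) p
              (vweight p p1 p2 w1 w2) ≤
            C * APconst p p1 p2 w1 w2 ^ (1 / p) *
              (∑' Q : S,
                avg (dualW p1 w1) (Q : Set (Rn n)) ^ (p / p1) *
                  avg (dualW p2 w2) (Q : Set (Rn n)) ^ (p / p2) *
                  volume (Q : Set (Rn n))) ^ (1 / p) := by
  obtain ⟨C, hC, hbound⟩ := statement6_general p p1 p2 hp1 hp2 hp
  exact ⟨C, hC, fun w1 w2 hw1 hw2 _ => hbound w1 w2 hw1.1 hw2.1⟩
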